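/- (Equational Arguments) For any k, m : ℕ, any S : Fin m → Set (Fin k → Bool), and any T : Set (Fin k → Bool), the equational argument with premises P_{S i}(x) = ∅ for all i and conclusion P_T(x) = ∅ is PSA-valid (i.e., for every nonempty type U and every assignment x : Fin k → Set U, if P_{S i}(x) = ∅ for all i then P_T(x) = ∅) if and only if T ⊆ ⋃ i, S i. -/

import Mathlib

/-- The constituent `C_σ(x)`. -/
def constituent {U : Type*} {k : ℕ} (x : Fin k → Set U) (σ : Fin k → Bool) : Set U :=
  ⋂ i, if σ i = true then x i else (x i)ᶜ

/-- The term function associated to a set `S` of constituent indices: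
`P_S(x) = ⋃ σ ∈ S, C_σ(x)`. -/
def PSfun {U : Type*} {k : ℕ} (S : Set (Fin k → Bool)) (x : Fin k → Set U) : Set U :=
  ⋃ σ ∈ S, constituent x σ

/-!
A point `a` lies in exactly one constituent, the one indexed by its membership profile
`i ↦ (a ∈ x i)`, so `P_S(x)` is the preimage of `S` under the profile map. Hence the premises
together say `P_{⋃ i, S i}(x) = ∅`, which gives the conclusion when `T ⊆ ⋃ i, S i`. Conversely,
an index `τ ∈ T` outside `⋃ i, S i` is the profile of the only point of a one-element universe,
where the premises hold and the conclusion fails.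
-/

universe u

section MembershipProfile

variable {U : Type*} {ι : Sort*}

open Classical in
/-- The membership profile of a point with respect to a family of sets: the Boolean vector
recording which sets of the family contain it. It is the index of the constituent containing the
point. -/
noncomputable def membershipProfile (x : ι → Set U) (a : U) : ι → Bool :=
  fun i => decide (a ∈ x i)

theorem membershipProfile_setOf (p : U → ι → Bool) :
    membershipProfile (fun i => {a | p a i = true}) = p := by
  funext a i
  simp [membershipProfile]

theorem mem_constituent_iff {k : ℕ} {x : Fin k → Set U} {σ : Fin k → Bool} {a : U} :
    a ∈ constituent x σ ↔ membershipProfile x a = σ := by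
  rw [constituent, Set.mem_iInter, funext_iff]
  refine forall_congr' fun i => ?_
  cases σ i <;> simp [membershipProfile]

theorem PSfun_eq_preimage {k : ℕ} (S : Set (Fin k → Bool)) (x : Fin k → Set U) :
    PSfun S x = membershipProfile x ⁻¹' S := by
  ext a
  simp [PSfun, mem_constituent_iff]

theorem PSfun_mono {k : ℕ} {S T : Set (Fin k → Bool)} (hST : S ⊆ T) (x : Fin k → Set U) :
    PSfun S x ⊆ PSfun T x :=
  Set.biUnion_subset_biUnion_left hST

theorem PSfun_iUnion {k : ℕ} (S : ι → Set (Fin k → Bool)) (x : Fin k → Set U) :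
    PSfun (⋃ i, S i) x = ⋃ i, PSfun (S i) x := by
  simp only [PSfun_eq_preimage, Set.preimage_iUnion]

end MembershipProfile

theorem equational_arguments_general {k : ℕ} {ι : Sort*} (S : ι → Set (Fin k → Bool))
    (T : Set (Fin k → Bool)) :
    (∀ (U : Type u), Nonempty U → ∀ x : Fin k → Set U,
      (∀ i, PSfun (S i) x = ∅) → PSfun T x = ∅) ↔ T ⊆ ⋃ i, S i := by
  constructor
  · intro valid τ hτ
    by_contra hτS
    let x : Fin k → Set PUnit := fun i => {_a | τ i = true}
    have profile_x : membershipProfile x = fun _ => τ := membershipProfile_setOf fun _ => τ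
    have premises : ∀ i, PSfun (S i) x = ∅ := by
      rw [← Set.iUnion_eq_empty, ← PSfun_iUnion, PSfun_eq_preimage, profile_x,
        Set.preimage_const_of_notMem hτS]
    have conclusion_fails : PSfun T x = Set.univ := by
      rw [PSfun_eq_preimage, profile_x, Set.preimage_const_of_mem hτ]
    exact Set.empty_ne_univ ((valid PUnit inferInstance x premises).symm.trans conclusion_fails)
  · intro hTS U _ x premises
    have union_empty : PSfun (⋃ i, S i) x = ∅ := by
      rwa [PSfun_iUnion, Set.iUnion_eq_empty]
    exact Set.subset_eq_empty (PSfun_mono hTS x) union_empty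

theorem equational_arguments (k m : ℕ) (S : Fin m → Set (Fin k → Bool))
    (T : Set (Fin k → Bool)) :
    (∀ (U : Type), Nonempty U → ∀ x : Fin k → Set U,
      (∀ i, PSfun (S i) x = ∅) → PSfun T x = ∅) ↔ T ⊆ ⋃ i, S i :=
  equational_arguments_general S T
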